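/- Let b>0, d∈ℕ and let (G_n)_{n≥0} be a (b,d)-expander. Let α∈(0,1/2) and c∈(0,1). There is a positive constant C', depending only on α, c, b, and d, such that for all n with |V_n| large enough and for every p ∈ [p_{n,α}(c), p_{n,1−α}(c)]: (d/dp) E_p(L_n^{(1)}) ≥ C'·|V_n|, where (d/dp) E_p(L_n^{(1)}) is the derivative at p of the map q ↦ E_{n,q}(L_n^{(1)}). -/

import Mathlib

open Filter

noncomputable section

/-- The spanning subgraph of `G` determined by the configuration `x : {0,1}^E`:
an edge of `G` is retained iff its coordinate equals `true`. -/
def percoGraph {V : Type*} (G : SimpleGraph V) (x : G.edgeSet → Bool) : SimpleGraph V :=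
  SimpleGraph.fromEdgeSet {e : Sym2 V | ∃ h : e ∈ G.edgeSet, x ⟨e, h⟩ = true}

/-- The vertex set of the connected component of `v` in the configuration `x`. -/
def percoComp {V : Type*} (G : SimpleGraph V) (x : G.edgeSet → Bool) (v : V) : Set V :=
  {u | (percoGraph G x).Reachable v u}

/-- The number of vertices of the connected component of `v` in the configuration `x`. -/
def compSize {V : Type*} (G : SimpleGraph V) (x : G.edgeSet → Bool) (v : V) : ℕ :=
  (percoComp G x v).ncard

/-- `L⁽¹⁾`: the number of vertices of the largest connected component of the configuration. -/
def largestComp {V : Type*} (G : SimpleGraph V) (x : G.edgeSet → Bool) : ℕ :=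
  sSup (Set.range (compSize G x))

/-- The probability of a single configuration under the product Bernoulli(p) measure. -/
def configProb {E : Type*} (p : ℝ) (x : E → Bool) : ℝ :=
  ∏ᶠ e : E, if x e then p else 1 - p

/-- The product Bernoulli(p) probability of a set of configurations. -/
def probC {E : Type*} (p : ℝ) (A : Set (E → Bool)) : ℝ :=
  ∑ᶠ x ∈ A, configProb p x

/-- Expectation under the product Bernoulli(p) measure. -/
def expC {E : Type*} (p : ℝ) (f : (E → Bool) → ℝ) : ℝ :=
  ∑ᶠ x : E → Bool, configProb p x * f x

/-- Variance under the product Bernoulli(p) measure. -/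
def varC {E : Type*} (p : ℝ) (f : (E → Bool) → ℝ) : ℝ :=
  expC p (fun x => f x ^ 2) - (expC p f) ^ 2

open Classical in
/-- The configuration `x` with coordinate `e` set to `b`. -/
def setEdge {E : Type*} (x : E → Bool) (e : E) (b : Bool) : E → Bool :=
  fun e' => if e' = e then b else x e'

/-- The operator `Δ_{e,p} f (x) = f(x) - ∫ f(x) dx(e)`. -/
def deltaE {E : Type*} (p : ℝ) (f : (E → Bool) → ℝ) (e : E) (x : E → Bool) : ℝ :=
  f x - (p * f (setEdge x e true) + (1 - p) * f (setEdge x e false))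

/-- The norm `‖g‖_{1,p}`. -/
def norm1 {E : Type*} (p : ℝ) (g : (E → Bool) → ℝ) : ℝ :=
  expC p fun x => |g x|

/-- The squared norm `‖g‖_{2,p}²`. -/
def sqNorm2 {E : Type*} (p : ℝ) (g : (E → Bool) → ℝ) : ℝ :=
  expC p fun x => g x ^ 2

/-- `|E(S, Sᶜ)|`: the number of edges of `G` with one endpoint in `S` and the other outside `S`
(counted via the ordered pair whose first coordinate lies in `S`). -/
def edgeBoundaryCard {V : Type*} (G : SimpleGraph V) (S : Set V) : ℕ :=
  {q : V × V | G.Adj q.1 q.2 ∧ q.1 ∈ S ∧ q.2 ∉ S}.ncard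

/-- The maximal degree of `G` is at most `d`. -/
def DegreeLE {V : Type*} (G : SimpleGraph V) (d : ℕ) : Prop :=
  ∀ v, {u | G.Adj v u}.ncard ≤ d

/-- The Cheeger (edge-isoperimetric) constant of `G` is strictly greater than `b`. -/
def CheegerGT {V : Type*} (G : SimpleGraph V) (b : ℝ) : Prop :=
  ∀ S : Set V, 0 < S.ncard → 2 * S.ncard ≤ Nat.card V →
    b * (S.ncard : ℝ) < (edgeBoundaryCard G S : ℝ)

/-- A `(b,d)`-expander: a sequence of finite graphs with `|V_n| → ∞`, maximal degree at most `d`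
and Cheeger constant greater than `b`. -/
structure ExpanderSeq (b : ℝ) (d : ℕ) where
  V : ℕ → Type
  finV : ∀ n, Finite (V n)
  G : ∀ n, SimpleGraph (V n)
  card_tendsto : Tendsto (fun n => Nat.card (V n)) atTop atTop
  degree_le : ∀ n, DegreeLE (G n) d
  cheeger_gt : ∀ n, CheegerGT (G n) b

section Generic

variable {E : Type*} [Fintype E] [DecidableEq E]

lemma configProb_eq (p : ℝ) (x : E → Bool) :
    configProb p x = ∏ e, if x e then p else 1 - p := by
  unfold configProb
  rw [finprod_eq_prod_of_fintype]

lemma expC_eq (p : ℝ) (f : (E → Bool) → ℝ) :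
    expC p f = ∑ x, configProb p x * f x := by
  unfold expC
  rw [finsum_eq_sum_of_fintype]

open Classical in
lemma probC_eq (p : ℝ) (A : Set (E → Bool)) :
    probC p A = expC p (fun x => if x ∈ A then 1 else 0) := by
  rw [expC_eq]
  unfold probC
  rw [finsum_eq_sum_of_fintype]
  refine Finset.sum_congr rfl fun x _ => ?_
  by_cases h : x ∈ A <;> simp [h]

lemma configProb_nonneg {p : ℝ} (h0 : 0 ≤ p) (h1 : p ≤ 1) (x : E → Bool) :
    0 ≤ configProb p x := by
  rw [configProb_eq]
  refine Finset.prod_nonneg fun e _ => ?_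
  split_ifs <;> linarith

lemma expC_one (p : ℝ) : expC p (fun _ : E → Bool => 1) = 1 := by
  rw [expC_eq]
  simp only [mul_one, configProb_eq]
  have := Finset.prod_univ_sum (R := ℝ) (fun _ : E => (Finset.univ : Finset Bool))
    (fun _ b => if b then p else 1 - p)
  rw [Fintype.piFinset_univ] at this
  rw [← this]
  simp

lemma expC_mono {p : ℝ} (h0 : 0 ≤ p) (h1 : p ≤ 1) {f g : (E → Bool) → ℝ}
    (h : ∀ x, f x ≤ g x) : expC p f ≤ expC p g := by
  rw [expC_eq, expC_eq]
  exact Finset.sum_le_sum fun x _ => mul_le_mul_of_nonneg_left (h x) (configProb_nonneg h0 h1 x)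

lemma expC_add (p : ℝ) (f g : (E → Bool) → ℝ) :
    expC p (fun x => f x + g x) = expC p f + expC p g := by
  simp only [expC_eq, mul_add, Finset.sum_add_distrib]

lemma expC_mul (p k : ℝ) (f : (E → Bool) → ℝ) :
    expC p (fun x => k * f x) = k * expC p f := by
  simp only [expC_eq, Finset.mul_sum]
  exact Finset.sum_congr rfl fun x _ => by ring

lemma expC_sum {ι : Type*} (p : ℝ) (s : Finset ι) (f : ι → (E → Bool) → ℝ) :
    expC p (fun x => ∑ i ∈ s, f i x) = ∑ i ∈ s, expC p (f i) := by
  simp only [expC_eq, Finset.mul_sum]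
  exact Finset.sum_comm

/-- discrete derivative in direction `e` -/
def dE (f : (E → Bool) → ℝ) (e : E) (x : E → Bool) : ℝ :=
  f (Function.update x e true) - f (Function.update x e false)

lemma flip_sum (e : E) (F : (E → Bool) → ℝ) :
    ∑ x, F (Function.update x e (!(x e))) = ∑ x, F x := by
  let φ : (E → Bool) → (E → Bool) := fun x => Function.update x e (!(x e))
  have hφ : Function.Involutive φ := by
    intro x
    funext e'
    by_cases h : e' = e
    · subst h; simp [φ]
    · simp [φ, h]
  exact (Equiv.sum_comp hφ.toPerm F)

lemma russo (p : ℝ) (f : (E → Bool) → ℝ) :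
    HasDerivAt (fun q => expC q f) (∑ e, expC p (dE f e)) p := by
  have h1 : ∀ x : E → Bool, HasDerivAt (fun q => configProb q x * f x)
      ((∑ e, (∏ e' ∈ Finset.univ.erase e, if x e' then p else 1 - p) *
        (if x e then 1 else -1)) * f x) p := by
    intro x
    simp only [configProb_eq]
    refine HasDerivAt.mul_const ?_ (f x)
    have := HasDerivAt.fun_finsetProd (u := (Finset.univ : Finset E)) (x := p)
      (f := fun e (q : ℝ) => if x e then q else 1 - q)
      (f' := fun e => if x e then (1:ℝ) else -1) (by
        intro e _
        by_cases h : x e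
        · simpa [h] using hasDerivAt_id' p
        · simpa [h] using (hasDerivAt_id' p).const_sub 1)
    simpa [smul_eq_mul] using this
  have h2 := HasDerivAt.fun_sum (u := (Finset.univ : Finset (E → Bool))) (fun x _ => h1 x)
  have h3 : (fun q => expC q f) = fun q => ∑ x, configProb q x * f x := by
    funext q; exact expC_eq q f
  rw [h3]
  refine h2.congr_deriv (Eq.symm ?_)
  simp only [Finset.sum_mul]
  rw [Finset.sum_comm]
  refine Finset.sum_congr rfl fun e _ => ?_
  rw [expC_eq]
  have key : ∀ x : E → Bool,
      configProb p x * dE f e x + configProb p (Function.update x e (!(x e))) *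
        dE f e (Function.update x e (!(x e))) =
      (∏ e' ∈ Finset.univ.erase e, if x e' then p else 1 - p) * (if x e then 1 else -1) * f x +
      (∏ e' ∈ Finset.univ.erase e, if (Function.update x e (!(x e))) e' then p else 1 - p) *
        (if (Function.update x e (!(x e))) e then 1 else -1) * f (Function.update x e (!(x e))) := by
    intro x
    have hr : (∏ e' ∈ Finset.univ.erase e,
        if (Function.update x e (!(x e))) e' then p else 1 - p) =
        ∏ e' ∈ Finset.univ.erase e, if x e' then p else 1 - p := by
      refine Finset.prod_congr rfl fun e' he' => ?_
      rw [Function.update_of_ne (Finset.ne_of_mem_erase he')]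
    rw [configProb_eq, configProb_eq, ← Finset.mul_prod_erase _ _ (Finset.mem_univ e),
      ← Finset.mul_prod_erase _ (fun e' => if (Function.update x e (!(x e))) e' then p else 1 - p)
        (Finset.mem_univ e), hr]
    have hx : Function.update x e (x e) = x := Function.update_eq_self e x
    cases h : x e
    · rw [h] at hx
      simp [dE, hx]; ring
    · rw [h] at hx
      simp [dE, hx]; ring
  have h4 := Finset.sum_congr rfl (fun x (_ : x ∈ (Finset.univ : Finset (E → Bool))) => key x)
  rw [Finset.sum_add_distrib, Finset.sum_add_distrib,
    flip_sum e (fun x => configProb p x * dE f e x),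
    flip_sum e (fun x => (∏ e' ∈ Finset.univ.erase e, if x e' then p else 1 - p) *
      (if x e then 1 else -1) * f x)] at h4
  linarith

lemma dE_nonneg {f : (E → Bool) → ℝ} (hf : Monotone f) (e : E) (x : E → Bool) :
    0 ≤ dE f e x := by
  unfold dE
  have : Function.update x e false ≤ Function.update x e true := by
    exact Function.update_mono (f := x) (i := e) (Bool.false_le true)
  linarith [hf this]

lemma expC_nonneg {p : ℝ} (h0 : 0 ≤ p) (h1 : p ≤ 1) {f : (E → Bool) → ℝ}
    (h : ∀ x, 0 ≤ f x) : 0 ≤ expC p f := by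
  rw [expC_eq]
  exact Finset.sum_nonneg fun x _ => mul_nonneg (configProb_nonneg h0 h1 x) (h x)

lemma expC_mono_p {f : (E → Bool) → ℝ} (hf : Monotone f) {p q : ℝ} (h0 : 0 ≤ p)
    (hpq : p ≤ q) (h1 : q ≤ 1) : expC p f ≤ expC q f := by
  have hm : MonotoneOn (fun q => expC q f) (Set.Icc 0 1) := by
    refine monotoneOn_of_deriv_nonneg (convex_Icc 0 1)
      (fun x _ => (russo x f).continuousAt.continuousWithinAt)
      (fun x _ => (russo x f).differentiableAt.differentiableWithinAt) ?_
    intro x hx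
    rw [interior_Icc] at hx
    rw [(russo x f).deriv]
    exact Finset.sum_nonneg fun e _ => expC_nonneg hx.1.le hx.2.le (dE_nonneg hf e)
  exact hm ⟨h0, hpq.trans h1⟩ ⟨h0.trans hpq, h1⟩ hpq

lemma swap_sum (p : ℝ) (S : Finset E) (F : (E → Bool) → (E → Bool) → ℝ) :
    expC p (fun x => expC p (fun y => F (S.piecewise y x) (S.piecewise x y))) =
      expC p (fun x => expC p (fun y => F x y)) := by
  let φ : (E → Bool) × (E → Bool) → (E → Bool) × (E → Bool) :=
    fun z => (S.piecewise z.2 z.1, S.piecewise z.1 z.2)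
  have hφ : Function.Involutive φ := by
    rintro ⟨x, y⟩
    refine Prod.ext ?_ ?_ <;>
    · funext e
      by_cases h : e ∈ S <;> simp [φ, h]
  have hw : ∀ z, configProb p (φ z).1 * configProb p (φ z).2 =
      configProb p z.1 * configProb p z.2 := by
    rintro ⟨x, y⟩
    simp only [configProb_eq, ← Finset.prod_mul_distrib]
    refine Finset.prod_congr rfl fun e _ => ?_
    by_cases h : e ∈ S
    · simp [φ, h, mul_comm]
    · simp [φ, h]
  have h := Equiv.sum_comp hφ.toPerm
    (fun z => configProb p z.1 * configProb p z.2 * F z.1 z.2)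
  simp only [Function.Involutive.coe_toPerm, hw] at h
  simp only [Fintype.sum_prod_type] at h
  simp only [expC_eq, Finset.mul_sum, ← mul_assoc]
  exact h

lemma abs_update_le (f : (E → Bool) → ℝ) (hf : Monotone f) (e : E) (x : E → Bool) (c : Bool) :
    |f x - f (Function.update x e c)| ≤ dE f e x := by
  have h0 := dE_nonneg hf e x
  have hx : Function.update x e (x e) = x := Function.update_eq_self e x
  unfold dE at *
  cases h : x e <;> rw [h] at hx <;> cases c <;> simp only [hx] at h0 ⊢ <;> rw [abs_le] <;>
    constructor <;> linarith

lemma l1_poincare_aux {p : ℝ} (h0 : 0 ≤ p) (h1 : p ≤ 1) (f : (E → Bool) → ℝ)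
    (hf : Monotone f) (S : Finset E) :
    expC p (fun x => expC p (fun y => |f x - f (S.piecewise y x)|)) ≤
      ∑ e ∈ S, expC p (dE f e) := by
  induction S using Finset.induction_on with
  | empty => simp [expC_eq]
  | insert e S he ih =>
    rw [Finset.sum_insert he]
    have step : expC p (fun x => expC p (fun y =>
        |f (S.piecewise y x) - f ((insert e S).piecewise y x)|)) ≤ expC p (dE f e) := by
      have hF := swap_sum p S (fun z w => |f z - f (Function.update z e (w e))|)
      have : ∀ x y : E → Bool, Function.update (S.piecewise y x) e ((S.piecewise x y) e) =
          (insert e S).piecewise y x := by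
        intro x y
        rw [Finset.piecewise_insert, Finset.piecewise_eq_of_notMem _ _ _ he]
      simp only [this] at hF
      rw [hF]
      refine expC_mono h0 h1 fun x => ?_
      calc _ ≤ expC p (fun _ => dE f e x * 1) := by
            refine expC_mono h0 h1 fun y => ?_
            rw [mul_one]
            exact abs_update_le f hf e x (y e)
        _ = _ := by rw [expC_mul, expC_one, mul_one]
    have tri : expC p (fun x => expC p (fun y => |f x - f ((insert e S).piecewise y x)|)) ≤
        expC p (fun x => expC p (fun y => |f x - f (S.piecewise y x)|)) +
        expC p (fun x => expC p (fun y =>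
          |f (S.piecewise y x) - f ((insert e S).piecewise y x)|)) := by
      rw [← expC_add]
      refine expC_mono h0 h1 fun x => ?_
      rw [← expC_add]
      exact expC_mono h0 h1 fun y => abs_sub_le _ _ _
    linarith

lemma l1_poincare {p : ℝ} (h0 : 0 ≤ p) (h1 : p ≤ 1) (f : (E → Bool) → ℝ)
    (hf : Monotone f) :
    expC p (fun x => expC p (fun y => |f x - f y|)) ≤ ∑ e, expC p (dE f e) := by
  have := l1_poincare_aux h0 h1 f hf Finset.univ
  simpa using this

end Generic

section Graph

variable {V : Type*} [Finite V] (G : SimpleGraph V)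

lemma percoGraph_adj (x : G.edgeSet → Bool) (u v : V) :
    (percoGraph G x).Adj u v ↔ ∃ h : G.Adj u v, x ⟨s(u, v), h⟩ = true := by
  unfold percoGraph
  rw [SimpleGraph.fromEdgeSet_adj]
  constructor
  · rintro ⟨⟨h, hx⟩, _⟩
    exact ⟨h, hx⟩
  · rintro ⟨h, hx⟩
    exact ⟨⟨h, hx⟩, h.ne⟩

lemma percoGraph_mono {x y : G.edgeSet → Bool} (h : x ≤ y) :
    percoGraph G x ≤ percoGraph G y := by
  intro u v huv
  rw [percoGraph_adj] at *
  obtain ⟨h1, h2⟩ := huv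
  refine ⟨h1, ?_⟩
  have := h ⟨s(u, v), h1⟩
  rw [h2] at this
  exact top_le_iff.mp this

lemma percoComp_mono {x y : G.edgeSet → Bool} (h : x ≤ y) (v : V) :
    percoComp G x v ⊆ percoComp G y v :=
  fun _ hu => SimpleGraph.Reachable.mono (percoGraph_mono G h) hu

lemma bdd_comp (x : G.edgeSet → Bool) : BddAbove (Set.range (compSize G x)) :=
  (Set.finite_range _).bddAbove

lemma compSize_le (x : G.edgeSet → Bool) (v : V) : compSize G x v ≤ largestComp G x :=
  le_csSup (bdd_comp G x) ⟨v, rfl⟩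

lemma exists_comp [Nonempty V] (x : G.edgeSet → Bool) :
    ∃ v, compSize G x v = largestComp G x :=
  Nat.sSup_mem (Set.range_nonempty _) (bdd_comp G x)

lemma largestComp_mono [Nonempty V] {x y : G.edgeSet → Bool} (h : x ≤ y) :
    largestComp G x ≤ largestComp G y := by
  obtain ⟨v, hv⟩ := exists_comp G x
  rw [← hv]
  exact (Set.ncard_le_ncard (percoComp_mono G h v) (Set.toFinite _)).trans (compSize_le G y v)

lemma edgeBoundary_compl (S : Set V) : edgeBoundaryCard G Sᶜ = edgeBoundaryCard G S := by
  unfold edgeBoundaryCard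
  refine Set.ncard_congr (fun q _ => (q.2, q.1)) ?_ ?_ ?_
  · rintro ⟨u, w⟩ ⟨h1, h2, h3⟩
    exact ⟨h1.symm, by simpa using h3, h2⟩
  · rintro ⟨u, w⟩ ⟨u', w'⟩ _ _ h
    simp only [Prod.mk.injEq] at *
    exact ⟨h.2, h.1⟩
  · rintro ⟨u, w⟩ ⟨h1, h2, h3⟩
    exact ⟨(w, u), ⟨h1.symm, h3, by simpa using h2⟩, rfl⟩

lemma cheeger_min {b : ℝ} (hG : CheegerGT G b) (hb : 0 < b) (S : Set V) :
    b * min (S.ncard : ℝ) (Nat.card V - S.ncard) ≤ edgeBoundaryCard G S := by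
  have hadd : S.ncard + Sᶜ.ncard = Nat.card V := Set.ncard_add_ncard_compl S
  have haddR : (S.ncard : ℝ) + Sᶜ.ncard = Nat.card V := by exact_mod_cast hadd
  have key : ∀ T : Set V, 2 * T.ncard ≤ Nat.card V → b * T.ncard ≤ edgeBoundaryCard G T := by
    intro T hT
    rcases Nat.eq_zero_or_pos T.ncard with h | h
    · rw [h]; simp
    · exact (hG T h hT).le
  by_cases h : 2 * S.ncard ≤ Nat.card V
  · exact (mul_le_mul_of_nonneg_left (min_le_left _ _) hb.le).trans (key S h)
  · have := key Sᶜ (by omega)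
    rw [edgeBoundary_compl] at this
    refine (mul_le_mul_of_nonneg_left (min_le_right _ _) hb.le).trans ?_
    rw [← haddR, add_sub_cancel_left]
    exact this

open Classical in
lemma boundary_bound [Nonempty V] [Fintype G.edgeSet] {b : ℝ} (hG : CheegerGT G b) (hb : 0 < b)
    (x : G.edgeSet → Bool) :
    b * min (largestComp G x : ℝ) (Nat.card V - largestComp G x) ≤
      ∑ e, dE (fun x => (largestComp G x : ℝ)) e x := by
  obtain ⟨v, hv⟩ := exists_comp G x
  have hmono : Monotone (fun x : G.edgeSet → Bool => (largestComp G x : ℝ)) :=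
    fun x y h => Nat.cast_le.mpr (largestComp_mono G h)
  set C := percoComp G x v with hC
  have hcard : C.ncard = largestComp G x := hv
  have h1 := cheeger_min G hG hb C
  rw [hcard] at h1
  refine h1.trans ?_
  set T : Finset G.edgeSet :=
    Finset.univ.filter (fun e => 1 ≤ dE (fun x => (largestComp G x : ℝ)) e x) with hT
  have h2 : (T.card : ℝ) ≤ ∑ e, dE (fun x => (largestComp G x : ℝ)) e x := by
    calc (T.card : ℝ) = ∑ e ∈ T, 1 := by simp
      _ ≤ ∑ e ∈ T, dE (fun x => (largestComp G x : ℝ)) e x :=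
        Finset.sum_le_sum fun e he => (Finset.mem_filter.mp he).2
      _ ≤ _ := Finset.sum_le_sum_of_subset_of_nonneg (Finset.subset_univ _)
        fun e _ _ => dE_nonneg hmono e x
  refine le_trans ?_ h2
  have h3 : edgeBoundaryCard G C ≤ (Set.image Subtype.val (T : Set G.edgeSet)).ncard := by
    unfold edgeBoundaryCard
    refine Set.ncard_le_ncard_of_injOn (fun q => s(q.1, q.2)) ?_ ?_ (Set.toFinite _)
    · rintro ⟨u, w⟩ ⟨hadj, hu, hw⟩
      simp only at hadj hu hw
      refine ⟨⟨s(u, w), hadj⟩, ?_, rfl⟩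
      rw [hT, Finset.mem_coe, Finset.mem_filter]
      refine ⟨Finset.mem_univ _, ?_⟩
      set e : G.edgeSet := ⟨s(u, w), hadj⟩ with he
      have hnot : x e = false := by
        by_contra hne
        have hx : x e = true := by simpa using hne
        apply hw
        have ha : (percoGraph G x).Adj u w := (percoGraph_adj G x u w).mpr ⟨hadj, hx⟩
        exact SimpleGraph.Reachable.trans hu ha.reachable
      have hfalse : Function.update x e false = x := by
        rw [← hnot]; exact Function.update_eq_self e x
      have hle : x ≤ Function.update x e true := by
        intro e'
        by_cases h : e' = e
        · subst h; simp [hnot]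
        · simp [h]
      have hsub : insert w C ⊆ percoComp G (Function.update x e true) v := by
        intro z hz
        rcases Set.mem_insert_iff.mp hz with rfl | hz
        · have hu' := percoComp_mono G hle v hu
          have ha : (percoGraph G (Function.update x e true)).Adj u z :=
            (percoGraph_adj G _ u z).mpr ⟨hadj, by simp [he]⟩
          exact SimpleGraph.Reachable.trans hu' ha.reachable
        · exact percoComp_mono G hle v hz
      have hc := Set.ncard_le_ncard hsub (Set.toFinite _)
      rw [Set.ncard_insert_of_notMem hw (Set.toFinite _), hcard] at hc
      have hc' := hc.trans (compSize_le G (Function.update x e true) v)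
      have hc2 : (largestComp G x : ℝ) + 1 ≤ largestComp G (Function.update x e true) := by
        exact_mod_cast hc'
      unfold dE
      rw [hfalse]
      linarith
    · rintro ⟨u, w⟩ ⟨_, hu, hw⟩ ⟨u', w'⟩ ⟨_, hu', hw'⟩ h
      simp only [Sym2.eq_iff] at h hu hw hu' hw'
      rcases h with ⟨rfl, rfl⟩ | ⟨rfl, rfl⟩
      · rfl
      · exact absurd hu hw'
  rw [Set.ncard_image_of_injective _ Subtype.val_injective, Set.ncard_coe_finset] at h3
  exact_mod_cast h3

end Graph

/-- inside the critical window, the expected size of the largest component has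
derivative at least `C' |V_n|`: there is `C' > 0`, depending only on `α, c, b, d`, such that
for all `n` with `|V_n|` large enough and every `p ∈ [p_{n,α}(c), p_{n,1-α}(c)]`,
`(d/dp) E_p(L_n⁽¹⁾) ≥ C' |V_n|`. Here `pa` plays the role of `p_{n,α}(c)` and `pb` of
`p_{n,1-α}(c)`. -/
theorem stmt14 (b : ℝ) (hb : 0 < b) (d : ℕ)
    (α : ℝ) (hα : α ∈ Set.Ioo (0 : ℝ) (1 / 2)) (c : ℝ) (hc : c ∈ Set.Ioo (0 : ℝ) 1) :
    ∃ C' > (0 : ℝ), ∀ E : ExpanderSeq b d, ∃ N : ℕ, ∀ n : ℕ, N ≤ Nat.card (E.V n) →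
      ∀ pa pb : ℝ, pa ∈ Set.Icc (0 : ℝ) 1 → pb ∈ Set.Icc (0 : ℝ) 1 →
        probC pa {x : (E.G n).edgeSet → Bool |
            c * (Nat.card (E.V n) : ℝ) ≤ (largestComp (E.G n) x : ℝ)} = α →
        probC pb {x : (E.G n).edgeSet → Bool |
            c * (Nat.card (E.V n) : ℝ) ≤ (largestComp (E.G n) x : ℝ)} = 1 - α →
        ∀ p ∈ Set.Icc pa pb,
          C' * (Nat.card (E.V n) : ℝ) ≤
            deriv (fun q => expC q (fun x => (largestComp (E.G n) x : ℝ))) p := by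
  classical
  obtain ⟨hα0, hα1⟩ := hα
  obtain ⟨hc0, hc1⟩ := hc
  have hκ : 0 < min (c / 2) (1 - c) := lt_min (by linarith) (by linarith)
  set κ := min (c / 2) (1 - c) with hκdef
  refine ⟨min (b * κ * (α / 2)) (c / 2 * (α * (α / 2))), lt_min (by positivity) (by positivity), ?_⟩
  intro E
  refine ⟨1, ?_⟩
  intro n hN pa pb hpa hpb ha hb' p hp
  have := E.finV n
  have : Nonempty (E.V n) := (Nat.card_pos_iff.mp hN).1
  have : Fintype (E.G n).edgeSet := Fintype.ofFinite _
  have hG := E.cheeger_gt n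
  generalize E.G n = G at *
  set N : ℝ := (Nat.card (E.V n) : ℝ) with hNdef
  have hN0 : 0 < N := by
    rw [hNdef]; exact_mod_cast hN
  set f : (G.edgeSet → Bool) → ℝ := fun x => (largestComp G x : ℝ) with hf
  have hmono : Monotone f := fun x y h => Nat.cast_le.mpr (largestComp_mono G h)
  have hp0 : 0 ≤ p := hpa.1.trans hp.1
  have hp1 : p ≤ 1 := hp.2.trans hpb.2
  rw [(russo p f).deriv]
  set S := ∑ e, expC p (dE f e) with hS
  have hAmono : Monotone (fun x : G.edgeSet → Bool => if c * N ≤ f x then (1 : ℝ) else 0) := by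
    intro x y h
    have := hmono h
    dsimp only
    split_ifs with h1 h2
    · exact le_rfl
    · exact absurd (h1.trans this) h2
    · exact zero_le_one
    · exact le_rfl
  rw [probC_eq] at ha hb'
  simp only [Set.mem_ofPred_eq] at ha hb'
  set A : (G.edgeSet → Bool) → ℝ := fun x => if c * N ≤ f x then 1 else 0 with hA
  have hpA : α ≤ expC p A := ha ▸ expC_mono_p hAmono hpa.1 hp.1 hp1
  have hpB : expC p A ≤ 1 - α := hb' ▸ expC_mono_p hAmono hp0 hp.2 hpb.2
  set M : (G.edgeSet → Bool) → ℝ := fun x => if c / 2 * N ≤ f x ∧ f x < c * N then 1 else 0 with hM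
  set L : (G.edgeSet → Bool) → ℝ := fun x => if f x < c / 2 * N then 1 else 0 with hL
  have hcN : c / 2 * N < c * N := by nlinarith
  have hsum : 1 ≤ expC p A + expC p M + expC p L := by
    rw [← expC_add, ← expC_add, ← expC_one (E := G.edgeSet) p]
    refine expC_mono hp0 hp1 fun x => ?_
    simp only [hA, hM, hL]
    by_cases h1 : c * N ≤ f x <;> by_cases h2 : f x < c / 2 * N <;>
      by_cases h3 : c / 2 * N ≤ f x ∧ f x < c * N <;> simp only [h1, h2, h3, if_true, if_false]
    all_goals first
      | norm_num; done
      | exact absurd ⟨not_lt.mp h2, not_le.mp h1⟩ h3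
  have hS1 : b * κ * N * expC p M ≤ S := by
    rw [hS, ← expC_sum, ← expC_mul]
    refine expC_mono hp0 hp1 fun x => ?_
    refine le_trans ?_ (boundary_bound G hG hb x)
    have hfx : (largestComp G x : ℝ) = f x := rfl
    rw [hfx, ← hNdef]
    simp only [hM]
    have hfN : f x ≤ N := by
      obtain ⟨v, hv⟩ := exists_comp G x
      simp only [hf, hNdef]
      rw [← hv]
      exact_mod_cast Set.ncard_le_card _
    have hf0 : 0 ≤ f x := Nat.cast_nonneg _
    split_ifs with h
    · rw [mul_one, mul_assoc]
      refine mul_le_mul_of_nonneg_left (le_min ?_ ?_) hb.le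
      · exact (mul_le_mul_of_nonneg_right (min_le_left _ _) hN0.le).trans h.1
      · refine (mul_le_mul_of_nonneg_right (min_le_right _ _) hN0.le).trans ?_
        nlinarith [h.2]
    · rw [mul_zero]
      exact mul_nonneg hb.le (le_min hf0 (by linarith))
  have hS2 : c / 2 * N * (expC p A * expC p L) ≤ S := by
    refine le_trans ?_ (l1_poincare hp0 hp1 f hmono)
    have : c / 2 * N * (expC p A * expC p L) =
        expC p (fun x => expC p (fun y => c / 2 * N * A x * L y)) := by
      simp only [expC_mul]
      have h1 : (fun x => c / 2 * N * A x * expC p L) =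
          fun x => (c / 2 * N * expC p L) * A x := by
        funext x; ring
      rw [h1, expC_mul]; ring
    rw [this]
    refine expC_mono hp0 hp1 fun x => expC_mono hp0 hp1 fun y => ?_
    simp only [hA, hL]
    split_ifs with h1 h2
    · refine le_trans ?_ (le_abs_self _)
      linarith
    all_goals simp
  rcases le_or_gt (α / 2) (expC p M) with h | h
  · refine le_trans ?_ hS1
    calc _ ≤ b * κ * (α / 2) * N := mul_le_mul_of_nonneg_right (min_le_left _ _) hN0.le
      _ = b * κ * N * (α / 2) := by ring
      _ ≤ _ := mul_le_mul_of_nonneg_left h (by positivity)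
  · refine le_trans ?_ hS2
    calc _ ≤ c / 2 * (α * (α / 2)) * N := mul_le_mul_of_nonneg_right (min_le_right _ _) hN0.le
      _ = c / 2 * N * (α * (α / 2)) := by ring
      _ ≤ _ := mul_le_mul_of_nonneg_left
        (mul_le_mul hpA (by linarith) (by linarith) (by linarith)) (by positivity)
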